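/- For every even integer k ≥ 4, the digraph S_k with incoming vertices i_1,…,i_k and outgoing vertices o_1,…,o_k is a k-in-out graph, and it has exactly 2k−1 vertices, which is the minimum possible number of vertices for a k-in-out graph. -/

import Mathlib

/-- A directed path in the digraph with edge relation `E` and vertex set `Vset`:
a nonempty list of distinct vertices of `Vset`, with consecutive vertices joined
by directed edges. -/
def IsPathOn {α : Type*} (E : α → α → Prop) (Vset : Finset α) (p : List α) : Prop :=
  p ≠ [] ∧ p.Nodup ∧ p.Chain' E ∧ ∀ x ∈ p, x ∈ Vset

/-- A Hamiltonian path from `u` to `v` in the digraph with edge relation `E`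
and vertex set `Vset`: a list of distinct vertices containing every vertex of `Vset`
(and no others), starting at `u`, ending at `v`, with consecutive vertices joined
by directed edges. -/
def IsHamPathOn {α : Type*} (E : α → α → Prop) (Vset : Finset α) (u v : α)
    (p : List α) : Prop :=
  p.Nodup ∧ p.Chain' E ∧ p.head? = some u ∧ p.getLast? = some v ∧ ∀ x, x ∈ p ↔ x ∈ Vset

/-- The single visit condition: there is no collection of two or more pairwise
vertex-disjoint directed paths, each starting at an incoming vertex and ending at an
outgoing vertex, whose union visits every vertex. -/
def SingleVisit {α : Type*} (E : α → α → Prop) (Vset : Finset α) {k : ℕ}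
    (inc out : Fin k → α) : Prop :=
  ¬ ∃ P : Finset (List α), 2 ≤ P.card ∧
      (∀ p ∈ P, IsPathOn E Vset p ∧ (∃ j, p.head? = some (inc j)) ∧
        (∃ m, p.getLast? = some (out m))) ∧
      (∀ p ∈ P, ∀ q ∈ P, p ≠ q → ∀ x, x ∈ p → x ∉ q) ∧
      (∀ x ∈ Vset, ∃ p ∈ P, x ∈ p)

/-- A `k`-in-out graph: a digraph (no loops, all edges within the vertex set) together
with `k` distinct incoming vertices and `k` distinct outgoing vertices (the two sets may
overlap), satisfying the paired vertices condition and the single visit condition. -/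
structure IsInOutGraph {α : Type*} (E : α → α → Prop) (Vset : Finset α) {k : ℕ}
    (inc out : Fin k → α) : Prop where
  no_loops : ∀ x, ¬ E x x
  edge_mem : ∀ x y, E x y → x ∈ Vset ∧ y ∈ Vset
  inc_mem : ∀ j, inc j ∈ Vset
  out_mem : ∀ j, out j ∈ Vset
  inc_inj : Function.Injective inc
  out_inj : Function.Injective out
  paired : ∀ j m, (∃ p, IsHamPathOn E Vset (inc j) (out m) p) ↔ j = m
  single_visit : SingleVisit E Vset inc out

/-- The directed edge set of the graph `S_k` for even `k ≥ 4`. -/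
def evenEdges (k : ℕ) : Finset (ℕ × ℕ) :=
  ((Finset.Icc 1 ((k - 2) / 2)).biUnion fun i =>
      {(4*i-2, 4*i-1), (4*i-1, 4*i-2), (4*i-1, 4*i), (4*i, 4*i-1),
        (4*i, 4*i+1), (4*i+1, 4*i)}) ∪
  ((Finset.Icc 1 ((k - 4) / 2)).biUnion fun i => {(4*i-2, 4*i+5), (4*i+1, 4*i+2)}) ∪
  ({(1, 2), (2*k-6, 2*k-1), (2*k-3, 2*k-2), (2*k-2, 1), (2*k-2, 5),
    (2*k-1, 2*k-2)} : Finset (ℕ × ℕ))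

/-- The `m`-th outgoing vertex `o_m` (with `1 ≤ m ≤ k`) of `S_k` for even `k ≥ 4`:
`o_1 = 3`, `o_{k-2} = 2k-1`, `o_{k-1} = 2k-7`, `o_k = 2k-3`, and otherwise
`o_{2j} = 4j+3` and `o_{2j+1} = 4j-3`. -/
def evenOut (k m : ℕ) : ℕ :=
  if m = 1 then 3
  else if m = k - 2 then 2*k - 1
  else if m = k - 1 then 2*k - 7
  else if m = k then 2*k - 3
  else if Even m then 2*m + 3
  else 2*m - 5

/-! Lower bound: a Hamiltonian path never steps from an outgoing to an incoming vertex, since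
cutting it there would give two paths violating the single visit condition. Each of the `k`
outgoing vertices except possibly the end of the path is left by a step, each of the `k` incoming
vertices except possibly its start is entered by a step, and these steps are all distinct, so
`2 * k - 2 ≤ n - 1`.

Single visit in `S_k`: every edge joins an odd and an even vertex and all terminals are odd, so a
path between terminals has exactly one more odd than even vertices. So does the whole vertex set,
so a covering family of disjoint paths has exactly one member.

Paired vertices in `S_k`: write `k = 2 * m + 2`. The vertices `4 * i - 2, …, 4 * i + 1` form the
`i`-th block, `1 ≤ i ≤ m`. A Hamiltonian path with odd ends goes through the middle vertex `4 * i`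
either upwards or downwards. If `j` is the last block traversed upwards, block `j + 1` is traversed
downwards, and between these two blocks so few edges remain usable that both ends are forced, up to
the choice of one of two pairs. Both choices are realised, for every `0 ≤ j ≤ m`. -/

/-! ### Paths with prescribed vertex set -/

section Paths

variable {α : Type*} {E : α → α → Prop} {s t : Finset α} {u v x y : α} {p : List α}

theorem IsHamPathOn.length_eq_card (h : IsHamPathOn E s u v p) : p.length = s.card := by
  classical
  obtain ⟨hnd, -, -, -, hmem⟩ := h
  rw [← List.toFinset_card_of_nodup hnd]
  congr 1
  ext x
  rw [List.mem_toFinset, hmem]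

/-- `s` is the exact vertex set of some directed path from `u` to `v`. Letting `s` vary allows
Hamiltonian paths to be assembled from shorter ones. -/
def HasHamPathOn (E : α → α → Prop) (s : Finset α) (u v : α) : Prop :=
  ∃ p, IsHamPathOn E s u v p

namespace HasHamPathOn

theorem singleton (u : α) : HasHamPathOn E {u} u u :=
  ⟨[u], List.nodup_singleton u, List.isChain_singleton u, rfl, rfl, by simp⟩

theorem append [DecidableEq α] (hs : HasHamPathOn E s u v) (hvx : E v x)
    (ht : HasHamPathOn E t x y) (hst : Disjoint s t) : HasHamPathOn E (s ∪ t) u y := by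
  obtain ⟨p, hpn, hpc, hpu, hpv, hps⟩ := hs
  obtain ⟨q, hqn, hqc, hqx, hqy, hqt⟩ := ht
  refine ⟨p ++ q, hpn.append hqn ?_, hpc.append hqc ?_, ?_, ?_, ?_⟩
  · intro z hzp hzq
    exact Finset.disjoint_left.1 hst ((hps z).1 hzp) ((hqt z).1 hzq)
  · simpa [hpv, hqx] using hvx
  · simp [hpu]
  · simp [hqy]
  · simp [hps, hqt]

theorem reverse (h : HasHamPathOn E s u v) : HasHamPathOn (flip E) s v u := by
  obtain ⟨p, hnd, hc, hu, hv, hmem⟩ := h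
  exact ⟨p.reverse, List.nodup_reverse.2 hnd, List.isChain_reverse.2 hc, by simpa, by simpa,
    by simpa⟩

theorem Icc_of_succ {E : ℕ → ℕ → Prop} {a b : ℕ} (hab : a ≤ b)
    (hE : ∀ x, a ≤ x → x < b → E x (x + 1)) : HasHamPathOn E (Finset.Icc a b) a b := by
  induction b, hab using Nat.le_induction with
  | base => simpa using singleton a
  | succ b hab ih =>
    rw [← Finset.insert_Icc_right_eq_Icc_add_one (by omega), Finset.insert_eq, Finset.union_comm]
    exact (ih fun x hax hxb => hE x hax (by omega)).append (hE b hab (by omega))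
      (singleton (b + 1)) (by simp)

theorem Icc_of_pred {E : ℕ → ℕ → Prop} {a b : ℕ} (hab : a ≤ b)
    (hE : ∀ x, a ≤ x → x < b → E (x + 1) x) : HasHamPathOn E (Finset.Icc a b) b a :=
  (Icc_of_succ (E := flip E) hab hE).reverse

end HasHamPathOn

end Paths

/-! ### Lower bound on the number of vertices -/

section LowerBound

variable {α : Type*} {E : α → α → Prop} {V : Finset α} {k : ℕ} {inc out : Fin k → α}

theorem countP_add_countP_le_of_isChain {P Q : α → Bool} {a : α} {l : List α}
    (h : (a :: l).IsChain fun x y => ¬(P x ∧ Q y)) :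
    (a :: l).countP P + l.countP Q ≤ l.length + 1 := by
  induction l generalizing a with
  | nil => simpa using List.countP_le_length (p := P) (l := [a])
  | cons b l ih =>
    obtain ⟨hab, hbl⟩ := List.isChain_cons_cons.1 h
    have htail := ih hbl
    rw [List.countP_cons (a := a), List.countP_cons (p := Q), List.length_cons]
    split_ifs with hPa hQb
    · exact absurd ⟨hPa, hQb⟩ hab
    all_goals omega

theorem le_countP_of_injective {f : Fin k → α} (hf : f.Injective) {p : List α} {P : α → Bool}
    (hfp : ∀ j, f j ∈ p) (hfP : ∀ j, P (f j)) : k ≤ p.countP P := by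
  have hsub : (List.ofFn f).Subperm p :=
    List.subperm_of_subset (List.nodup_ofFn.2 hf) (by simpa [List.subset_def] using hfp)
  have hcount : (List.ofFn f).countP P = k := by
    rw [List.countP_eq_length.2 (by simpa using hfP), List.length_ofFn]
  exact hcount ▸ hsub.countP_le P

theorem SingleVisit.not_out_inc_of_isHamPathOn (hsv : SingleVisit E V inc out) {i o : Fin k}
    {p : List α} (hp : IsHamPathOn E V (inc i) (out o) p) :
    p.IsChain fun x y => ¬(x ∈ Set.range out ∧ y ∈ Set.range inc) := by
  classical
  obtain ⟨hnd, hc, hu, hv, hmem⟩ := hp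
  rw [List.isChain_iff_forall_rel_of_append_cons_cons]
  rintro x y l₁ l₂ hsplit ⟨⟨m, rfl⟩, ⟨j, rfl⟩⟩
  replace hsplit : p = (l₁ ++ [out m]) ++ (inc j :: l₂) := by simpa using hsplit
  subst hsplit
  obtain ⟨hnd₁, hnd₂, hdisj⟩ := List.nodup_append'.1 hnd
  obtain ⟨hc₁, hc₂, -⟩ := List.isChain_append.1 hc
  have hne : l₁ ++ [out m] ≠ inc j :: l₂ := fun h =>
    hdisj (a := inc j) (by simp [h]) (by simp)
  refine hsv ⟨{l₁ ++ [out m], inc j :: l₂}, (Finset.card_pair hne).ge, ?_, ?_, ?_⟩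
  · simp only [Finset.forall_mem_insert, Finset.mem_singleton, forall_eq]
    refine ⟨⟨⟨by simp, hnd₁, hc₁, fun x hx => (hmem x).1 (List.mem_append_left _ hx)⟩,
      ⟨i, ?_⟩, ⟨m, by simp⟩⟩, ⟨⟨by simp, hnd₂, hc₂,
      fun x hx => (hmem x).1 (List.mem_append_right _ hx)⟩, ⟨j, rfl⟩, ⟨o, ?_⟩⟩⟩
    · rwa [List.head?_append_of_ne_nil _ (by simp)] at hu
    · rwa [List.getLast?_append_of_ne_nil _ (by simp)] at hv
  · simp only [Finset.forall_mem_insert, Finset.mem_singleton, forall_eq]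
    exact ⟨⟨fun h => absurd rfl h, fun _ _ hx hx' => hdisj hx hx'⟩,
      fun _ _ hx hx' => hdisj hx' hx, fun h => absurd rfl h⟩
  · intro x hx
    simpa [or_assoc] using (hmem x).2 hx

theorem IsInOutGraph.two_mul_le_card_add_one (h : IsInOutGraph E V inc out) :
    2 * k ≤ V.card + 1 := by
  classical
  obtain rfl | hk := k.eq_zero_or_pos
  · omega
  obtain ⟨p, hp⟩ := (h.paired ⟨0, hk⟩ ⟨0, hk⟩).2 rfl
  have hmem := hp.2.2.2.2
  have hchain := h.single_visit.not_out_inc_of_isHamPathOn hp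
  have hcard := hp.length_eq_card
  have hout : k ≤ p.countP (· ∈ Set.range out) :=
    le_countP_of_injective h.out_inj (fun j => (hmem _).2 (h.out_mem j)) (by simp)
  have hinc : k ≤ p.countP (· ∈ Set.range inc) :=
    le_countP_of_injective h.inc_inj (fun j => (hmem _).2 (h.inc_mem j)) (by simp)
  obtain _ | ⟨a, l⟩ := p
  · rw [List.countP_nil] at hinc
    omega
  have hsteps := countP_add_countP_le_of_isChain (P := (· ∈ Set.range out))
    (Q := (· ∈ Set.range inc)) (by simpa using hchain)
  have hhead := List.countP_cons (p := (· ∈ Set.range inc)) (a := a) (l := l)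
  rw [List.length_cons] at hcard
  split_ifs at hhead <;> omega

end LowerBound

/-! ### The single visit condition from an alternating weight -/

section Weight

variable {α : Type*} {E : α → α → Prop} {V : Finset α} {k : ℕ} {inc out : Fin k → α}

theorem two_mul_sum_map_of_isChain {w : α → ℤ} {p : List α} {u v : α}
    (hp : p.IsChain fun x y => w x + w y = 0) (hu : p.head? = some u)
    (hv : p.getLast? = some v) : 2 * (p.map w).sum = w u + w v := by
  induction p generalizing u with
  | nil => simp at hu
  | cons a l ih =>
    obtain rfl : a = u := by simpa using hu
    obtain _ | ⟨b, l⟩ := l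
    · obtain rfl : a = v := by simpa using hv
      simp [two_mul]
    · obtain ⟨hab, hbl⟩ := List.isChain_cons_cons.1 hp
      have htail := ih hbl rfl (by simpa using hv)
      rw [List.map_cons, List.sum_cons]
      omega

theorem singleVisit_of_alternating_weight {w : α → ℤ} (hE : ∀ x y, E x y → w x + w y = 0)
    (hinc : ∀ j, w (inc j) = 1) (hout : ∀ j, w (out j) = 1) (hV : ∑ x ∈ V, w x = 1) :
    SingleVisit E V inc out := by
  classical
  rintro ⟨P, hcard, hpath, hdisj, hcover⟩
  have hunion : V = P.biUnion List.toFinset := by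
    ext x
    simp only [Finset.mem_biUnion, List.mem_toFinset]
    exact ⟨hcover x, fun ⟨p, hp, hx⟩ => (hpath p hp).1.2.2.2 x hx⟩
  have hpairwise : (P : Set (List α)).PairwiseDisjoint List.toFinset := fun p hp q hq hpq =>
    Finset.disjoint_left.2 (by simpa using hdisj p hp q hq hpq)
  have hweight : ∀ p ∈ P, ∑ x ∈ p.toFinset, w x = 1 := by
    intro p hp
    obtain ⟨⟨-, hnd, hc, -⟩, ⟨i, hi⟩, ⟨o, ho⟩⟩ := hpath p hp
    have hsum := two_mul_sum_map_of_isChain (hc.imp hE) hi ho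
    rw [hinc, hout] at hsum
    exact (List.sum_toFinset w hnd).trans (by omega)
  rw [hunion, Finset.sum_biUnion hpairwise, Finset.sum_congr rfl hweight] at hV
  simp only [Finset.sum_const, nsmul_eq_mul, mul_one] at hV
  omega

end Weight

/-! ### Position of a vertex along a Hamiltonian path -/

section Position

variable {α : Type*} [DecidableEq α] {E : α → α → Prop} {V : Finset α} {u v x y : α} {p : List α}

theorem idxOf_eq_idxOf_add_one_of_nodup {l₁ l₂ : List α} (h : (l₁ ++ x :: y :: l₂).Nodup) :
    (l₁ ++ x :: y :: l₂).idxOf y = (l₁ ++ x :: y :: l₂).idxOf x + 1 := by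
  obtain ⟨-, hxy, hdisj⟩ := List.nodup_append'.1 h
  have hxl : x ∉ l₁ := fun hx => hdisj hx (by simp)
  have hyl : y ∉ l₁ := fun hy => hdisj hy (by simp)
  have hne : x ≠ y := by
    rintro rfl
    simp at hxy
  rw [List.idxOf_append_of_notMem hxl, List.idxOf_append_of_notMem hyl, List.idxOf_cons_self,
    List.idxOf_cons_ne _ hne, List.idxOf_cons_self]

namespace IsHamPathOn

theorem eq_of_idxOf_eq (h : IsHamPathOn E V u v p) (hx : x ∈ V)
    (hxy : p.idxOf x = p.idxOf y) : x = y :=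
  (List.idxOf_inj ((h.2.2.2.2 x).2 hx)).1 hxy

theorem idxOf_head (h : IsHamPathOn E V u v p) : p.idxOf u = 0 := by
  obtain ⟨l, rfl⟩ := List.head?_eq_some_iff.1 h.2.2.1
  exact List.idxOf_cons_self

theorem idxOf_getLast_add_one (h : IsHamPathOn E V u v p) : p.idxOf v + 1 = V.card := by
  rw [← h.length_eq_card]
  obtain ⟨l, rfl⟩ := List.getLast?_eq_some_iff.1 h.2.2.2.1
  have hvl : v ∉ l := fun hv => (List.nodup_append'.1 h.1).2.2 hv (by simp)
  simp [List.idxOf_append_of_notMem hvl]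

theorem exists_succ (h : IsHamPathOn E V u v p) (hx : x ∈ V) (hxv : x ≠ v) :
    ∃ y, E x y ∧ p.idxOf y = p.idxOf x + 1 := by
  obtain ⟨hnd, hc, -, hv, hmem⟩ := h
  obtain ⟨l₁, l₂, rfl⟩ := List.append_of_mem ((hmem x).2 hx)
  obtain _ | ⟨y, l₂⟩ := l₂
  · exact absurd (by simpa using hv) hxv
  · exact ⟨y, (List.isChain_append_cons_cons.1 hc).2.1, idxOf_eq_idxOf_add_one_of_nodup hnd⟩

theorem exists_pred (h : IsHamPathOn E V u v p) (hx : x ∈ V) (hxu : x ≠ u) :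
    ∃ y, E y x ∧ p.idxOf x = p.idxOf y + 1 := by
  obtain ⟨hnd, hc, hu, -, hmem⟩ := h
  obtain ⟨l₁, l₂, rfl⟩ := List.append_of_mem ((hmem x).2 hx)
  obtain rfl | ⟨l₁, y, rfl⟩ := l₁.eq_nil_or_concat'
  · exact absurd (by simpa using hu) hxu
  · rw [List.append_assoc, List.singleton_append] at hnd hc ⊢
    exact ⟨y, (List.isChain_append_cons_cons.1 hc).2.1, idxOf_eq_idxOf_add_one_of_nodup hnd⟩

theorem eq_start_or_eq_start_of_pred_unique {a : α} (h : IsHamPathOn E V u v p) (hx : x ∈ V)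
    (hy : y ∈ V) (hxy : x ≠ y) (hxa : ∀ z, E z x → p.idxOf x = p.idxOf z + 1 → z = a)
    (hya : ∀ z, E z y → p.idxOf y = p.idxOf z + 1 → z = a) : x = u ∨ y = u := by
  by_contra! hne
  obtain ⟨z, hzx, hpx⟩ := h.exists_pred hx hne.1
  obtain ⟨z', hzy, hpy⟩ := h.exists_pred hy hne.2
  obtain rfl := hxa z hzx hpx
  obtain rfl := hya z' hzy hpy
  exact hxy (h.eq_of_idxOf_eq hx (hpx.trans hpy.symm))

theorem eq_end_or_eq_end_of_succ_unique {a : α} (h : IsHamPathOn E V u v p) (hx : x ∈ V)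
    (hy : y ∈ V) (hxy : x ≠ y) (hxa : ∀ z, E x z → p.idxOf z = p.idxOf x + 1 → z = a)
    (hya : ∀ z, E y z → p.idxOf z = p.idxOf y + 1 → z = a) : x = v ∨ y = v := by
  by_contra! hne
  obtain ⟨z, hxz, hpx⟩ := h.exists_succ hx hne.1
  obtain ⟨z', hyz, hpy⟩ := h.exists_succ hy hne.2
  obtain rfl := hxa z hxz hpx
  obtain rfl := hya z' hyz hpy
  exact hxy (h.eq_of_idxOf_eq hx (Nat.succ_injective (hpx.symm.trans hpy)))

end IsHamPathOn

end Position

/-! ### The digraph `S_k` for `k = 2 * m + 2` -/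

/-- The edge relation of `S_k` for `k = 2 * m + 2`, on the vertices `1, …, 4 * m + 3`, sorted by
direction: the steps `x → x + 1`; the steps `y + 1 → y`, absent when `y ≡ 1 [MOD 4]`, where `y` is
the top of a block; the jumps from the bottom of a block to the top of the next one, the last jump
being truncated to `4 * m + 3`; and the two returns from `4 * m + 2`. -/
def EvenAdj (m x y : ℕ) : Prop :=
  (y = x + 1 ∧ 1 ≤ x ∧ x ≤ 4 * m + 1) ∨
    (x = y + 1 ∧ 1 ≤ y ∧ y ≤ 4 * m + 2 ∧ y % 4 ≠ 1) ∨
    (x % 4 = 2 ∧ x + 2 ≤ 4 * m ∧ y = min (x + 7) (4 * m + 3)) ∨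
    (x = 4 * m + 2 ∧ (y = 1 ∨ y = 5))

theorem EvenAdj.of_mem_evenEdges {m x y : ℕ} (hm : 1 ≤ m)
    (h : (x, y) ∈ evenEdges (2 * m + 2)) : EvenAdj m x y := by
  simp only [evenEdges, Finset.mem_union, Finset.mem_biUnion, Finset.mem_Icc, Finset.mem_insert,
    Finset.mem_singleton, Prod.mk.injEq] at h
  obtain (⟨i, hi, h⟩ | ⟨i, hi, h⟩) | h := h
  · obtain h | h | h | h | h | h := h
    exacts [.inl (by omega), .inr (.inl (by omega)), .inl (by omega), .inr (.inl (by omega)),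
      .inl (by omega), .inr (.inl (by omega))]
  · obtain h | h := h
    exacts [.inr (.inr (.inl (by omega))), .inl (by omega)]
  · obtain h | h | h | h | h | h := h
    exacts [.inl (by omega), .inr (.inr (.inl (by omega))), .inl (by omega),
      .inr (.inr (.inr (by omega))), .inr (.inr (.inr (by omega))), .inr (.inl (by omega))]

theorem EvenAdj.mem_evenEdges {m x y : ℕ} (h : EvenAdj m x y) :
    (x, y) ∈ evenEdges (2 * m + 2) := by
  simp only [evenEdges, Finset.mem_union, Finset.mem_biUnion,
    Finset.mem_Icc, Finset.mem_insert, Finset.mem_singleton, Prod.mk.injEq]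
  obtain h | h | h | h := h
  · by_cases hx : x % 4 = 1
    · by_cases hends : x = 1 ∨ x = 4 * m + 1
      · exact .inr (by omega)
      · exact .inl (.inr ⟨x / 4, by omega, by omega⟩)
    · exact .inl (.inl ⟨(x + 2) / 4, by omega, by omega⟩)
  · by_cases hy : y = 4 * m + 2
    · exact .inr (by omega)
    · exact .inl (.inl ⟨(y + 2) / 4, by omega, by omega⟩)
  · by_cases hx : x = 4 * m - 2
    · exact .inr (by omega)
    · exact .inl (.inr ⟨(x + 2) / 4, by omega, by omega⟩)
  · exact .inr (by omega)

/-- The vertex below the middle `4 * j` of block `j`, a possible start of a Hamiltonian path that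
traverses the blocks `1, …, j` upwards and the others downwards. For `j = 0` the truncated
subtraction leaves the vertex `1`. -/
def lowerStart (j : ℕ) : ℕ := max 1 (4 * j - 1)

/-- The top of block `j + 1`, the other possible start of such a path. For `j = m` the vertex
`4 * m + 3` replaces the missing block. -/
def upperStart (m j : ℕ) : ℕ := min (4 * j + 5) (4 * m + 3)

/-- The pairs of ends of the Hamiltonian paths of `S_k`, `k = 2 * m + 2`. -/
def IsEndPair (m u v : ℕ) : Prop :=
  ∃ j ≤ m, (u = lowerStart j ∧ v = 4 * j + 3) ∨ (u = upperStart m j ∧ v = 4 * j + 1)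

theorem IsEndPair.end_mem {m u v : ℕ} (h : IsEndPair m u v) : v ∈ Finset.Icc 1 (4 * m + 3) := by
  obtain ⟨j, hj, h⟩ := h
  rw [Finset.mem_Icc]
  omega

theorem IsEndPair.odd_end {m u v : ℕ} (h : IsEndPair m u v) : Odd v := by
  obtain ⟨j, -, h⟩ := h
  rw [Nat.odd_iff]
  omega

theorem IsEndPair.start_unique {m u u' v : ℕ} (h : IsEndPair m u v) (h' : IsEndPair m u' v) :
    u = u' := by
  obtain ⟨i, -, h⟩ := h
  obtain ⟨j, -, h'⟩ := h'
  simp only [lowerStart, upperStart] at h h'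
  omega

theorem isEndPair_evenOut {m n : ℕ} (hn : n < 2 * m + 2) :
    IsEndPair m (2 * n + 1) (evenOut (2 * m + 2) (n + 1)) := by
  have hout : (n = 0 ∧ evenOut (2 * m + 2) (n + 1) = 3) ∨
      (n = 2 * m + 1 ∧ evenOut (2 * m + 2) (n + 1) = 4 * m + 1) ∨
      (n % 2 = 1 ∧ n < 2 * m ∧ evenOut (2 * m + 2) (n + 1) = 2 * n + 5) ∨
      (n % 2 = 0 ∧ n ≠ 0 ∧ evenOut (2 * m + 2) (n + 1) = 2 * n - 3) := by
    simp only [evenOut, Nat.even_iff]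
    split_ifs <;> omega
  simp only [IsEndPair, lowerStart, upperStart]
  obtain h | h | h | h := hout
  · exact ⟨0, by omega⟩
  · exact ⟨m, by omega⟩
  · exact ⟨(n + 1) / 2, by omega⟩
  · exact ⟨n / 2 - 1, by omega⟩

/-! ### Existence of Hamiltonian paths in `S_k` -/

section Existence

variable {m j : ℕ}

theorem hasHamPathOn_lower_run (hj : j ≤ m) :
    HasHamPathOn (EvenAdj m) (Finset.Icc (lowerStart j) (4 * j + 1)) (lowerStart j)
      (4 * j + 1) := by
  unfold lowerStart
  exact .Icc_of_succ (by omega) fun x _ _ => .inl (by omega)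

theorem hasHamPathOn_upper_run (hj : j ≤ m) :
    HasHamPathOn (EvenAdj m) (Finset.Icc (4 * j + 3) (upperStart m j)) (upperStart m j)
      (4 * j + 3) := by
  unfold upperStart
  exact .Icc_of_pred (by omega) fun x _ _ => .inr (.inl (by omega))

theorem hasHamPathOn_descent (hj : j ≤ m) :
    HasHamPathOn (EvenAdj m) (insert (4 * j + 2) (Finset.Icc (4 * j + 6) (4 * m + 3)))
      (4 * j + 2) (4 * m + 2) := by
  induction hj using Nat.decreasingInduction with
  | self =>
    rw [Finset.Icc_eq_empty (by omega)]
    exact .singleton _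
  | of_succ j hj ih =>
    have hjump : EvenAdj m (4 * j + 2) (upperStart m (j + 1)) :=
      .inr (.inr (.inl (by unfold upperStart; omega)))
    have hstep : EvenAdj m (4 * (j + 1) + 3) (4 * (j + 1) + 2) := .inr (.inl (by omega))
    have hset : insert (4 * j + 2) (Finset.Icc (4 * j + 6) (4 * m + 3)) =
        {4 * j + 2} ∪ Finset.Icc (4 * (j + 1) + 3) (upperStart m (j + 1)) ∪
          insert (4 * (j + 1) + 2) (Finset.Icc (4 * (j + 1) + 6) (4 * m + 3)) := by
      ext x
      simp only [upperStart, Finset.mem_union, Finset.mem_insert, Finset.mem_singleton,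
        Finset.mem_Icc]
      omega
    rw [hset]
    refine ((HasHamPathOn.singleton _).append hjump (hasHamPathOn_upper_run hj) ?_).append hstep
      ih ?_ <;>
    · simp only [Finset.disjoint_left, upperStart, Finset.mem_union, Finset.mem_insert,
        Finset.mem_singleton, Finset.mem_Icc]
      omega

theorem hasHamPathOn_upperStart (hj : j ≤ m) :
    HasHamPathOn (EvenAdj m) (Finset.Icc 1 (4 * m + 3)) (upperStart m j) (4 * j + 1) := by
  have hclimb : HasHamPathOn (EvenAdj m) (Finset.Icc 1 (4 * j + 1)) 1 (4 * j + 1) :=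
    .Icc_of_succ (by omega) fun x _ _ => .inl (by omega)
  have hstep : EvenAdj m (4 * j + 3) (4 * j + 2) := .inr (.inl (by omega))
  have hreturn : EvenAdj m (4 * m + 2) 1 := .inr (.inr (.inr (by omega)))
  have hset : Finset.Icc 1 (4 * m + 3) = Finset.Icc (4 * j + 3) (upperStart m j) ∪
      insert (4 * j + 2) (Finset.Icc (4 * j + 6) (4 * m + 3)) ∪ Finset.Icc 1 (4 * j + 1) := by
    ext x
    simp only [upperStart, Finset.mem_union, Finset.mem_insert, Finset.mem_Icc]
    omega
  rw [hset]
  refine ((hasHamPathOn_upper_run hj).append hstep (hasHamPathOn_descent hj) ?_).append hreturn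
    hclimb ?_ <;>
  · simp only [Finset.disjoint_left, upperStart, Finset.mem_union, Finset.mem_insert,
      Finset.mem_Icc]
    omega

theorem hasHamPathOn_lowerStart_descent (hj : j ≤ m) :
    HasHamPathOn (EvenAdj m) (Finset.Icc (lowerStart j) (4 * j + 2) ∪
      Finset.Icc (4 * j + 6) (4 * m + 3)) (lowerStart j) (4 * m + 2) := by
  have hstep : EvenAdj m (4 * j + 1) (4 * j + 2) := .inl (by omega)
  have hset : Finset.Icc (lowerStart j) (4 * j + 2) ∪ Finset.Icc (4 * j + 6) (4 * m + 3) =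
      Finset.Icc (lowerStart j) (4 * j + 1) ∪
        insert (4 * j + 2) (Finset.Icc (4 * j + 6) (4 * m + 3)) := by
    ext x
    simp only [lowerStart, Finset.mem_union, Finset.mem_insert, Finset.mem_Icc]
    omega
  rw [hset]
  refine (hasHamPathOn_lower_run hj).append hstep (hasHamPathOn_descent hj) ?_
  simp only [Finset.disjoint_left, Finset.mem_insert, Finset.mem_Icc]
  omega

theorem hasHamPathOn_return (hm : 1 ≤ m) (hj : j ≤ m) :
    ∃ x, EvenAdj m (4 * m + 2) x ∧ HasHamPathOn (EvenAdj m)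
      (Finset.Ico 1 (lowerStart j) ∪ Finset.Icc (4 * j + 3) (upperStart m j)) x (4 * j + 3) := by
  have hrun := hasHamPathOn_upper_run hj
  obtain rfl | hj0 := j.eq_zero_or_pos
  · exact ⟨upperStart m 0, .inr (.inr (.inr (by unfold upperStart; omega))), by
      simpa [lowerStart] using hrun⟩
  have hclimb : HasHamPathOn (EvenAdj m) (Finset.Icc 1 (4 * j - 2)) 1 (4 * j - 2) :=
    .Icc_of_succ (by omega) fun x _ _ => .inl (by omega)
  have hjump : EvenAdj m (4 * j - 2) (upperStart m j) :=
    .inr (.inr (.inl (by unfold upperStart; omega)))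
  have hset : Finset.Ico 1 (lowerStart j) = Finset.Icc 1 (4 * j - 2) := by
    ext x
    simp only [lowerStart, Finset.mem_Ico, Finset.mem_Icc]
    omega
  rw [hset]
  refine ⟨1, .inr (.inr (.inr (by omega))), hclimb.append hjump hrun ?_⟩
  simp only [Finset.disjoint_left, Finset.mem_Icc]
  omega

theorem hasHamPathOn_lowerStart (hm : 1 ≤ m) (hj : j ≤ m) :
    HasHamPathOn (EvenAdj m) (Finset.Icc 1 (4 * m + 3)) (lowerStart j) (4 * j + 3) := by
  obtain ⟨x, hx, hreturn⟩ := hasHamPathOn_return hm hj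
  have hset : Finset.Icc 1 (4 * m + 3) =
      (Finset.Icc (lowerStart j) (4 * j + 2) ∪ Finset.Icc (4 * j + 6) (4 * m + 3)) ∪
        (Finset.Ico 1 (lowerStart j) ∪ Finset.Icc (4 * j + 3) (upperStart m j)) := by
    ext x
    simp only [lowerStart, upperStart, Finset.mem_union, Finset.mem_Ico, Finset.mem_Icc]
    omega
  rw [hset]
  refine (hasHamPathOn_lowerStart_descent hj).append hx hreturn ?_
  simp only [Finset.disjoint_left, lowerStart, upperStart, Finset.mem_union, Finset.mem_Ico,
    Finset.mem_Icc]
  omega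

theorem IsEndPair.hasHamPathOn {u v : ℕ} (hm : 1 ≤ m) (h : IsEndPair m u v) :
    HasHamPathOn (EvenAdj m) (Finset.Icc 1 (4 * m + 3)) u v := by
  obtain ⟨j, hj, ⟨rfl, rfl⟩ | ⟨rfl, rfl⟩⟩ := h
  · exact hasHamPathOn_lowerStart hm hj
  · exact hasHamPathOn_upperStart hj

end Existence

/-! ### Ends of Hamiltonian paths in `S_k` -/

/-- Block `j` is traversed upwards and block `j + 1` downwards by the path `p`, for `0 ≤ j ≤ m`.
The blocks `0` and `m + 1` do not exist and are subject to no condition. -/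
structure IsTurn (m : ℕ) (p : List ℕ) (j : ℕ) : Prop where
  le : j ≤ m
  up : 1 ≤ j → p.idxOf (4 * j) = p.idxOf (4 * j - 1) + 1 ∧
    p.idxOf (4 * j + 1) = p.idxOf (4 * j) + 1
  down : j < m → p.idxOf (4 * j + 4) = p.idxOf (4 * j + 5) + 1 ∧
    p.idxOf (4 * j + 3) = p.idxOf (4 * j + 4) + 1

section Ends

variable {m j u v : ℕ} {p : List ℕ}

theorem IsHamPathOn.block_up_or_down {i : ℕ}
    (h : IsHamPathOn (EvenAdj m) (Finset.Icc 1 (4 * m + 3)) u v p) (hu : Odd u) (hv : Odd v)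
    (hi : 1 ≤ i) (him : i ≤ m) :
    (p.idxOf (4 * i) = p.idxOf (4 * i - 1) + 1 ∧ p.idxOf (4 * i + 1) = p.idxOf (4 * i) + 1) ∨
      (p.idxOf (4 * i) = p.idxOf (4 * i + 1) + 1 ∧
        p.idxOf (4 * i - 1) = p.idxOf (4 * i) + 1) := by
  rw [Nat.odd_iff] at hu hv
  have hmem : 4 * i ∈ Finset.Icc 1 (4 * m + 3) := Finset.mem_Icc.2 (by omega)
  obtain ⟨x, hx, hpx⟩ := h.exists_pred hmem (by omega)
  obtain ⟨y, hy, hpy⟩ := h.exists_succ hmem (by omega)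
  have hx' : x = 4 * i - 1 ∨ x = 4 * i + 1 := by unfold EvenAdj at hx; omega
  have hy' : y = 4 * i - 1 ∨ y = 4 * i + 1 := by unfold EvenAdj at hy; omega
  obtain rfl | rfl := hx' <;> obtain rfl | rfl := hy' <;> omega

theorem IsHamPathOn.exists_isTurn
    (h : IsHamPathOn (EvenAdj m) (Finset.Icc 1 (4 * m + 3)) u v p) (hu : Odd u) (hv : Odd v) :
    ∃ j, IsTurn m p j := by
  classical
  let up (i : ℕ) : Prop := p.idxOf (4 * i) = p.idxOf (4 * i - 1) + 1 ∧
    p.idxOf (4 * i + 1) = p.idxOf (4 * i) + 1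
  refine ⟨Nat.findGreatest up m, Nat.findGreatest_le m, fun hpos => ?_, fun hlt => ?_⟩
  · exact Nat.findGreatest_of_ne_zero (P := up) rfl (by omega)
  · have hnot := Nat.findGreatest_is_greatest (P := up) (Nat.lt_succ_self _) hlt
    exact (h.block_up_or_down hu hv (by omega) hlt).resolve_left hnot

/-- The only possible predecessor of either start candidate at the turn `j`. -/
def turnEntry (m j : ℕ) : ℕ := if j = 0 then 4 * m + 2 else 4 * j - 2

namespace IsTurn

theorem eq_turnEntry_of_adj_lowerStart {z : ℕ} (ht : IsTurn m p j)
    (hz : EvenAdj m z (lowerStart j))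
    (hpos : p.idxOf (lowerStart j) = p.idxOf z + 1) : z = turnEntry m j := by
  obtain rfl | hj := j.eq_zero_or_pos
  · simp only [EvenAdj, lowerStart] at hz
    rw [turnEntry, if_pos rfl]
    omega
  · have hstart : lowerStart j = 4 * j - 1 := by unfold lowerStart; omega
    have hle := ht.le
    rw [hstart] at hz hpos
    rw [turnEntry, if_neg hj.ne']
    obtain rfl | hz : z = 4 * j ∨ z = 4 * j - 2 := by unfold EvenAdj at hz; omega
    · have hup := ht.up hj
      omega
    · exact hz

theorem eq_turnEntry_of_adj_upperStart {z : ℕ} (ht : IsTurn m p j)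
    (hz : EvenAdj m z (upperStart m j))
    (hpos : p.idxOf (upperStart m j) = p.idxOf z + 1) : z = turnEntry m j := by
  obtain rfl | hlt := ht.le.eq_or_lt
  · simp only [EvenAdj, upperStart] at hz
    unfold turnEntry
    split_ifs <;> omega
  · have hstart : upperStart m j = 4 * j + 5 := by unfold upperStart; omega
    rw [hstart] at hz hpos
    obtain rfl | hz : z = 4 * j + 4 ∨ z = turnEntry m j := by
      unfold EvenAdj at hz
      unfold turnEntry
      split_ifs <;> omega
    · have hdown := ht.down hlt
      omega
    · exact hz

theorem start_eq (ht : IsTurn m p j)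
    (h : IsHamPathOn (EvenAdj m) (Finset.Icc 1 (4 * m + 3)) u v p) :
    u = lowerStart j ∨ u = upperStart m j := by
  have hle := ht.le
  rw [eq_comm, eq_comm (a := u)]
  refine h.eq_start_or_eq_start_of_pred_unique ?_ ?_ ?_
    (fun _ => ht.eq_turnEntry_of_adj_lowerStart) (fun _ => ht.eq_turnEntry_of_adj_upperStart)
  all_goals
    simp only [lowerStart, upperStart, Finset.mem_Icc]
    omega

theorem end_eq (ht : IsTurn m p j)
    (h : IsHamPathOn (EvenAdj m) (Finset.Icc 1 (4 * m + 3)) u v p) :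
    v = 4 * j + 1 ∨ v = 4 * j + 3 := by
  have hle := ht.le
  rw [eq_comm, eq_comm (a := v)]
  refine h.eq_end_or_eq_end_of_succ_unique (a := 4 * j + 2) (Finset.mem_Icc.2 (by omega))
    (Finset.mem_Icc.2 (by omega)) (by omega) (fun z hz hpos => ?_) (fun z hz hpos => ?_)
  · obtain ⟨hj, rfl⟩ | hz : (1 ≤ j ∧ z = 4 * j) ∨ z = 4 * j + 2 := by unfold EvenAdj at hz; omega
    · have hup := ht.up hj
      omega
    · exact hz
  · obtain ⟨hlt, rfl⟩ | hz : (j < m ∧ z = 4 * j + 4) ∨ z = 4 * j + 2 := by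
      unfold EvenAdj at hz; omega
    · have hdown := ht.down hlt
      omega
    · exact hz

theorem not_isHamPathOn_lowerStart (ht : IsTurn m p j) :
    ¬IsHamPathOn (EvenAdj m) (Finset.Icc 1 (4 * m + 3)) (lowerStart j) (4 * j + 1) p := by
  intro h
  have hstart := h.idxOf_head
  have hend := h.idxOf_getLast_add_one
  have hle := ht.le
  rw [Nat.card_Icc] at hend
  obtain rfl | hj := j.eq_zero_or_pos
  · change p.idxOf 1 = 0 at hstart
    change p.idxOf 1 + 1 = _ at hend
    omega
  · rw [show lowerStart j = 4 * j - 1 by unfold lowerStart; omega] at hstart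
    have hup := ht.up hj
    omega

theorem not_isHamPathOn_upperStart (hm : 1 ≤ m) (ht : IsTurn m p j) :
    ¬IsHamPathOn (EvenAdj m) (Finset.Icc 1 (4 * m + 3)) (upperStart m j) (4 * j + 3) p := by
  intro h
  have hstart := h.idxOf_head
  have hend := h.idxOf_getLast_add_one
  rw [Nat.card_Icc] at hend
  obtain rfl | hlt := ht.le.eq_or_lt
  · rw [show upperStart j j = 4 * j + 3 by unfold upperStart; omega] at hstart
    omega
  · rw [show upperStart m j = 4 * j + 5 by unfold upperStart; omega] at hstart
    have hdown := ht.down hlt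
    omega

end IsTurn

theorem IsHamPathOn.isEndPair (hm : 1 ≤ m)
    (h : IsHamPathOn (EvenAdj m) (Finset.Icc 1 (4 * m + 3)) u v p) (hu : Odd u) (hv : Odd v) :
    IsEndPair m u v := by
  obtain ⟨j, ht⟩ := h.exists_isTurn hu hv
  obtain rfl | rfl := ht.start_eq h <;> obtain rfl | rfl := ht.end_eq h
  · exact absurd h ht.not_isHamPathOn_lowerStart
  · exact ⟨j, ht.le, .inl ⟨rfl, rfl⟩⟩
  · exact ⟨j, ht.le, .inr ⟨rfl, rfl⟩⟩
  · exact absurd h (ht.not_isHamPathOn_upperStart hm)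

theorem hasHamPathOn_iff_isEndPair (hm : 1 ≤ m) (hu : Odd u) (hv : Odd v) :
    HasHamPathOn (EvenAdj m) (Finset.Icc 1 (4 * m + 3)) u v ↔ IsEndPair m u v :=
  ⟨fun ⟨_, h⟩ => h.isEndPair hm hu hv, fun h => h.hasHamPathOn hm⟩

end Ends

/-! ### `S_k` is a `k`-in-out graph -/

section InOut

variable {m : ℕ}

theorem EvenAdj.odd_add {x y : ℕ} (h : EvenAdj m x y) : Odd (x + y) := by
  rw [Nat.odd_iff]
  unfold EvenAdj at h
  omega

theorem EvenAdj.mem_Icc {x y : ℕ} (hm : 1 ≤ m) (h : EvenAdj m x y) :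
    x ∈ Finset.Icc 1 (4 * m + 3) ∧ y ∈ Finset.Icc 1 (4 * m + 3) := by
  simp only [Finset.mem_Icc]
  unfold EvenAdj at h
  omega

theorem sum_Icc_neg_one_pow (n : ℕ) :
    ∑ x ∈ Finset.Icc 1 n, (-1 : ℤ) ^ (x + 1) = if Even n then 0 else 1 := by
  rw [← Finset.Ico_add_one_right_eq_Icc, Finset.sum_Ico_eq_sum_range, ← neg_one_geom_sum]
  exact Finset.sum_congr rfl fun x _ => by ring

theorem singleVisit_evenAdj {k : ℕ} {inc out : Fin k → ℕ} (hinc : ∀ j, Odd (inc j))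
    (hout : ∀ j, Odd (out j)) :
    SingleVisit (EvenAdj m) (Finset.Icc 1 (4 * m + 3)) inc out := by
  refine singleVisit_of_alternating_weight (w := fun x => (-1) ^ (x + 1)) ?_
    (fun j => (hinc j).add_one.neg_one_pow) (fun j => (hout j).add_one.neg_one_pow) ?_
  · intro x y h
    obtain hx | hx := x.even_or_odd
    · have hy : Odd y := (Nat.odd_add'.1 h.odd_add).2 hx
      simp [hx.add_one.neg_one_pow, hy.add_one.neg_one_pow]
    · have hy : Even y := (Nat.odd_add.1 h.odd_add).1 hx
      simp [hx.add_one.neg_one_pow, hy.add_one.neg_one_pow]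
  · rw [sum_Icc_neg_one_pow, if_neg (by rw [Nat.even_iff]; omega)]

theorem isInOutGraph_evenAdj (hm : 1 ≤ m) :
    IsInOutGraph (EvenAdj m) (Finset.Icc 1 (4 * m + 3)) (fun j : Fin (2 * m + 2) => 2 * (j : ℕ) + 1)
      (fun j : Fin (2 * m + 2) => evenOut (2 * m + 2) ((j : ℕ) + 1)) := by
  have hpair (j : Fin (2 * m + 2)) := isEndPair_evenOut j.isLt
  have hinc (j : Fin (2 * m + 2)) : Odd (2 * (j : ℕ) + 1) := odd_two_mul_add_one _
  have hinj : Function.Injective fun j : Fin (2 * m + 2) => 2 * (j : ℕ) + 1 :=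
    fun i j hij => Fin.ext (by simpa using hij)
  exact
    { no_loops := fun x h => Nat.not_odd_iff_even.2 (Even.add_self x) h.odd_add
      edge_mem := fun x y h => h.mem_Icc hm
      inc_mem := fun j => Finset.mem_Icc.2 (by omega)
      out_mem := fun j => (hpair j).end_mem
      inc_inj := hinj
      out_inj := fun i j (hij : evenOut _ _ = evenOut _ _) =>
        hinj ((hpair i).start_unique (by rw [hij]; exact hpair j))
      paired := fun i j => by
        refine (hasHamPathOn_iff_isEndPair hm (hinc i) (hpair j).odd_end).trans ⟨fun h => ?_, ?_⟩
        · exact hinj (h.start_unique (hpair j))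
        · rintro rfl
          exact hpair i
      single_visit := singleVisit_evenAdj hinc fun j => (hpair j).odd_end }

end InOut

/-- for even `k ≥ 4`, the digraph `S_k` with incoming vertices
`i_j = 2j - 1` and outgoing vertices `o_j` is a `k`-in-out graph, it has exactly
`2k - 1` vertices, and `2k - 1` is the minimum possible number of vertices of a
`k`-in-out graph. -/
theorem evenSk_isInOut_optimal (k : ℕ) (hk : 4 ≤ k) (hke : Even k) :
    IsInOutGraph (fun x y => (x, y) ∈ evenEdges k) (Finset.Icc 1 (2 * k - 1))
      (fun j : Fin k => 2 * (j : ℕ) + 1) (fun j : Fin k => evenOut k ((j : ℕ) + 1)) ∧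
    (Finset.Icc 1 (2 * k - 1)).card = 2 * k - 1 ∧
    ∀ {β : Type} [DecidableEq β] (E' : β → β → Prop) (Vset' : Finset β)
      (inc' out' : Fin k → β), IsInOutGraph E' Vset' inc' out' →
        2 * k - 1 ≤ Vset'.card := by
  obtain ⟨m, rfl⟩ : ∃ m, k = 2 * m + 2 := by
    obtain ⟨r, rfl⟩ := hke
    exact ⟨r - 1, by omega⟩
  have hm : 1 ≤ m := by omega
  have hE : (fun x y => (x, y) ∈ evenEdges (2 * m + 2)) = EvenAdj m := by
    ext x y
    exact ⟨EvenAdj.of_mem_evenEdges hm, EvenAdj.mem_evenEdges⟩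
  have hV : 2 * (2 * m + 2) - 1 = 4 * m + 3 := by omega
  rw [hE, hV]
  refine ⟨isInOutGraph_evenAdj hm, by simp, fun E' V' inc' out' h => ?_⟩
  have hbound := h.two_mul_le_card_add_one
  omega
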